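/- Let r ≥ 2 and let B : ℤ^r × ℤ^r → ℤ be a symmetric bilinear form, extended ℝ-bilinearly to ℝ^r, such that B(v,v) > 0 for some v ∈ ℤ^r. Let ω' ∈ ℝ^r and let α, β be real numbers with β > 0 and α > −B(ω',ω')/(2β). Then there exist a sequence (A_k) of positive rational numbers, a sequence (τ_k) of primitive vectors in ℤ^r, and a sequence (i_k) of integers such that, setting ω'_k := (1/A_k)·τ_k ∈ ℝ^r, the following hold: (a) the sequence ω'_k converges to ω'; (b) B(ω'_k, ω'_k) > B(ω', ω') for every k; (c) α > i_k/A_k > −B(ω',ω')/(2β) for every k. -/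

import Mathlib

/-- A vector `τ ∈ ℤ^r` is primitive (indivisible) if whenever `τ = d • x` with
`d ∈ ℤ` and `x ∈ ℤ^r`, then `d = 1` or `d = −1`. -/
def IsPrimitiveVec {r : ℕ} (τ : Fin r → ℤ) : Prop :=
  ∀ (d : ℤ) (x : Fin r → ℤ), τ = d • x → d = 1 ∨ d = -1

theorem approx_primitive (r : ℕ) (hr : 2 ≤ r) (u : Fin r → ℝ) (n : ℕ) (hn : 0 < n) :
    ∃ (τ : Fin r → ℤ) (A : ℕ), IsPrimitiveVec τ ∧ n ≤ A ∧
      ∀ j, |(τ j : ℝ) / (A : ℝ) - u j| ≤ 3 / n := by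
  have hnR : (0 : ℝ) < n := by exact_mod_cast hn
  obtain ⟨e, he, h1⟩ : ∃ e : Fin r → ℤ, (∀ j, |(e j : ℝ) - n * u j| ≤ 2) ∧
      e ⟨1, by omega⟩ ≠ 0 := by
    refine ⟨fun j => if ⌊(n : ℝ) * u j⌋ = 0 then 1 else ⌊(n : ℝ) * u j⌋, ?_, ?_⟩
    · intro j
      have a := Int.floor_le ((n : ℝ) * u j)
      have b := Int.lt_floor_add_one ((n : ℝ) * u j)
      rw [abs_le]
      dsimp only
      split_ifs with h
      · rw [h] at a b
        push_cast at *
        constructor <;> linarith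
      · constructor <;> linarith
    · dsimp only
      split_ifs with h
      · exact one_ne_zero
      · exact h
  set d : ℤ := e ⟨1, by omega⟩ with hd
  have hdn : 0 < d.natAbs := Int.natAbs_pos.mpr h1
  set K : ℕ := d.natAbs * n with hK
  have hKpos : 0 < K := Nat.mul_pos hdn hn
  have hKR : (1 : ℝ) ≤ K := by exact_mod_cast hKpos
  have hdK : d ∣ (K : ℤ) := by
    rw [hK]; push_cast
    exact Dvd.dvd.mul_right ((dvd_abs _ _).mpr dvd_rfl) _
  refine ⟨fun j => K * e j + if j = ⟨0, by omega⟩ then 1 else 0, K * n, ?_,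
    Nat.le_mul_of_pos_left n hKpos, ?_⟩
  · intro g x hx
    have hx0 := congrFun hx ⟨0, by omega⟩
    have hx1 := congrFun hx ⟨1, by omega⟩
    simp [← hd] at hx0 hx1
    have g0 : g ∣ (K : ℤ) * e ⟨0, by omega⟩ + 1 := ⟨_, hx0⟩
    have g1 : g ∣ (K : ℤ) * d := ⟨_, hx1⟩
    have c1 : IsCoprime ((K : ℤ) * e ⟨0, by omega⟩ + 1) (K : ℤ) :=
      ⟨1, -e ⟨0, by omega⟩, by ring⟩
    have c2 := c1.mul_right (c1.of_isCoprime_of_dvd_right hdK)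
    exact Int.isUnit_iff.mp (c2.isUnit_of_dvd' g0 g1)
  · intro j
    have hj := abs_le.mp (he j)
    have key : (((K : ℤ) * e j + if j = ⟨0, by omega⟩ then 1 else 0 : ℤ) : ℝ)
        / ((K * n : ℕ) : ℝ) - u j
        = ((e j - n * u j) + (if j = ⟨0, by omega⟩ then 1 else 0) / K) / n := by
      split_ifs <;> push_cast <;> field_simp <;> ring
    dsimp only
    rw [key, abs_div, abs_of_pos hnR]
    gcongr
    have h0 : (0 : ℝ) ≤ (if j = ⟨0, by omega⟩ then 1 else 0) / K := by positivity
    have h2 : (if j = ⟨0, by omega⟩ then (1 : ℝ) else 0) / K ≤ 1 := by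
      rw [div_le_one (by linarith)]
      split_ifs <;> linarith
    rw [abs_le]
    constructor <;> linarith [hj.1, hj.2]

/-- The technical lemma: for a symmetric integer-valued bilinear form `B` on
`ℤ^r` (`r ≥ 2`), extended `ℝ`-bilinearly to `ℝ^r`, taking a positive value on
some integral vector, and reals `β > 0`, `α > −B(ω',ω')/(2β)`, there are
positive rationals `A_k`, primitive integral vectors `τ_k` and integers `i_k`
such that `ω'_k := (1/A_k)·τ_k → ω'`, `B(ω'_k,ω'_k) > B(ω',ω')` for all `k`,
and `α > i_k/A_k > −B(ω',ω')/(2β)` for all `k`. -/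
theorem technical_lemma (r : ℕ) (hr : 2 ≤ r)
    (B : (Fin r → ℝ) →ₗ[ℝ] (Fin r → ℝ) →ₗ[ℝ] ℝ)
    (hsymm : ∀ x y, B x y = B y x)
    (hint : ∀ x y : Fin r → ℤ,
      ∃ n : ℤ, B (fun j => (x j : ℝ)) (fun j => (y j : ℝ)) = (n : ℝ))
    (hpos : ∃ v : Fin r → ℤ, B (fun j => (v j : ℝ)) (fun j => (v j : ℝ)) > 0)
    (ω' : Fin r → ℝ) (α β : ℝ) (hβ : β > 0)
    (hα : α > -B ω' ω' / (2 * β)) :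
    ∃ (A : ℕ → ℚ) (τ : ℕ → Fin r → ℤ) (i : ℕ → ℤ),
      (∀ k, 0 < A k) ∧ (∀ k, IsPrimitiveVec (τ k)) ∧
      (Filter.Tendsto
        (fun k => fun j => ((τ k j : ℝ) / (A k : ℝ))) Filter.atTop (nhds ω')) ∧
      (∀ k, B (fun j => ((τ k j : ℝ) / (A k : ℝ)))
              (fun j => ((τ k j : ℝ) / (A k : ℝ))) > B ω' ω') ∧
      (∀ k, α > (i k : ℝ) / (A k : ℝ) ∧
            (i k : ℝ) / (A k : ℝ) > -B ω' ω' / (2 * β)) := by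
  have hcont : Continuous (fun x : Fin r → ℝ => B x x) := by
    have : Continuous (fun x : Fin r → ℝ => LinearMap.toContinuousLinearMap
        ((LinearMap.toContinuousLinearMap : ((Fin r → ℝ) →ₗ[ℝ] ℝ) ≃ₗ[ℝ] _).toLinearMap ∘ₗ B) x x) := by
      fun_prop
    exact this
  obtain ⟨w, hw, hw'⟩ : ∃ w : Fin r → ℝ, B w w > 0 ∧ 0 ≤ B ω' w := by
    obtain ⟨v, hv⟩ := hpos
    rcases le_total 0 (B ω' (fun j => (v j : ℝ))) with h | h
    · exact ⟨_, hv, h⟩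
    · exact ⟨-(fun j => (v j : ℝ)), by simpa using hv, by simpa using h⟩
  have main : ∀ k : ℕ, ∃ (A : ℚ) (τ : Fin r → ℤ) (i : ℤ), 0 < A ∧ IsPrimitiveVec τ ∧
      dist (fun j => ((τ j : ℝ) / (A : ℝ))) ω' < 1 / ((k : ℝ) + 1) ∧
      B (fun j => ((τ j : ℝ) / (A : ℝ))) (fun j => ((τ j : ℝ) / (A : ℝ))) > B ω' ω' ∧
      α > (i : ℝ) / (A : ℝ) ∧ (i : ℝ) / (A : ℝ) > -B ω' ω' / (2 * β) := by
    intro k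
    have hk : (0 : ℝ) < 1 / ((k : ℝ) + 1) := by positivity
    obtain ⟨u, hu1, hu2⟩ : ∃ u : Fin r → ℝ, dist u ω' < 1 / ((k : ℝ) + 1) ∧
        B u u > B ω' ω' := by
      have hc : Filter.Tendsto (fun t : ℝ => ω' + t • w) (nhdsWithin 0 (Set.Ioi 0))
          (nhds ω') := by
        have : Continuous (fun t : ℝ => ω' + t • w) := by fun_prop
        have h := this.tendsto 0
        simp only [zero_smul, add_zero] at h
        exact h.mono_left nhdsWithin_le_nhds
      obtain ⟨t, ht, htpos⟩ := ((hc.eventually (Metric.ball_mem_nhds ω' hk)).and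
        self_mem_nhdsWithin).exists
      have htpos : 0 < t := htpos
      refine ⟨_, ht, ?_⟩
      simp only [map_add, map_smul, LinearMap.add_apply, LinearMap.smul_apply, smul_eq_mul]
      rw [hsymm w ω']
      have p1 : 0 < t * (t * B w w) := by positivity
      have p2 : 0 ≤ t * B ω' w := by positivity
      linarith
    have hU : ∀ᶠ x in nhds u, dist x ω' < 1 / ((k : ℝ) + 1) ∧ B x x > B ω' ω' :=
      ((continuous_id.dist continuous_const).continuousAt.eventually_lt_const hu1).and
        (hcont.continuousAt.eventually_const_lt hu2)
    obtain ⟨ε, hε, hball⟩ := Metric.eventually_nhds_iff.mp hU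
    set L := -B ω' ω' / (2 * β) with hL
    have hαL : 0 < α - L := by linarith
    obtain ⟨n, hn⟩ := exists_nat_gt (max (3 / ε) (1 / (α - L)))
    have hn1 := (le_max_left _ _).trans_lt hn
    have hn2 := (le_max_right _ _).trans_lt hn
    have hnR : (0 : ℝ) < n := lt_trans (by positivity) hn1
    obtain ⟨τ, A, hp, hA, hτ⟩ := approx_primitive r hr u n (by exact_mod_cast hnR)
    have hAn : (n : ℝ) ≤ A := by exact_mod_cast hA
    have hA0 : (0 : ℝ) < A := by linarith
    have hd : dist (fun j => ((τ j : ℝ) / (((A : ℚ)) : ℝ))) u < ε := by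
      rw [dist_pi_lt_iff hε]
      intro j
      rw [Real.dist_eq, Rat.cast_natCast]
      refine (hτ j).trans_lt ?_
      rw [div_lt_iff₀ hε] at hn1
      rw [div_lt_iff₀ hnR]
      linarith
    obtain ⟨q1, q2⟩ := hball hd
    refine ⟨A, τ, ⌊(A : ℝ) * L⌋ + 1, by exact_mod_cast hA0, hp, q1, q2, ?_, ?_⟩
    · rw [Rat.cast_natCast, gt_iff_lt, div_lt_iff₀ hA0]
      push_cast
      have a := Int.floor_le ((A : ℝ) * L)
      rw [div_lt_iff₀ hαL] at hn2
      nlinarith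
    · rw [Rat.cast_natCast, gt_iff_lt, lt_div_iff₀ hA0]
      push_cast
      have b := Int.lt_floor_add_one ((A : ℝ) * L)
      linarith
  choose A τ i h1 h2 h3 h4 h5 using main
  refine ⟨A, τ, i, h1, h2, ?_, h4, h5⟩
  rw [tendsto_iff_dist_tendsto_zero]
  exact squeeze_zero (fun _ => dist_nonneg) (fun k => (h3 k).le)
    tendsto_one_div_add_atTop_nhds_zero_nat
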